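/- arXiv:1704.07943 — 3 statements merged into one kernel-verified Lean document; each statement's English description precedes it below -/
import Mathlib

section
/- Let G be a bipartite network with nonempty base-arm set 𝒩, let U ⊆ 𝒦 be nonempty with gaps Δ_j > 0 (j ∈ U), let O = 𝒦 \ U, and let J_i > 0 for i ∈ 𝒩. Let v denote the optimal value of LP P2 and c_μ the optimal value of LP P1. Then v ≤ (max_{i∈𝒩} J_i / min_{j∈U} Δ_j) · c_μ + |O|. (Upper inequality of Proposition 3.) -/
open Finset

/-- The support of base-arm `i`: actions `j` whose observation set `V j` contains `i`. -/
def support' {K N : Type*} [Fintype K] [DecidableEq N] (V : K → Finset N) (i : N) :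
    Finset K :=
  Finset.univ.filter (fun j => i ∈ V j)

/-- upper inequality of Proposition 3. Let `v` be the optimal value of
LP `P2` and `c_μ` the optimal value of LP `P1`. Then
`v ≤ (max_{i∈𝒩} J_i / min_{j∈U} Δ_j) · c_μ + |O|`, where `O = 𝒦 \ U`. -/
theorem lp2_le_lp1
    {K N : Type*} [Fintype K] [Fintype N] [DecidableEq K] [DecidableEq N] [Nonempty N]
    (V : K → Finset N) (hsupp : ∀ i : N, ∃ j : K, i ∈ V j)
    (U : Finset K) (hU : U.Nonempty)
    (Δ : K → ℝ) (hΔ : ∀ j ∈ U, 0 < Δ j)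
    (J : N → ℝ) (hJ : ∀ i : N, 0 < J i) :
    sInf {s : ℝ | ∃ z : K → ℝ, (∀ j : K, 0 ≤ z j) ∧
        (∀ i : N, 1 ≤ ∑ j ∈ support' V i, z j) ∧ s = ∑ j, z j} ≤
      (Finset.univ.sup' Finset.univ_nonempty J / U.inf' hU Δ) *
        sInf {s : ℝ | ∃ w : K → ℝ, (∀ j : K, 0 ≤ w j) ∧
          (∀ i : N, 1 / J i ≤ ∑ j ∈ support' V i, w j) ∧ s = ∑ j ∈ U, Δ j * w j}
      + ((Finset.univ \ U).card : ℝ) := by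
  set M := Finset.univ.sup' Finset.univ_nonempty J with hM
  set d := U.inf' hU Δ with hd
  have hJM : ∀ i, J i ≤ M := fun i => Finset.le_sup' J (Finset.mem_univ i)
  have hdΔ : ∀ j ∈ U, d ≤ Δ j := fun j hj => Finset.inf'_le Δ hj
  have hMpos : 0 < M := lt_of_lt_of_le (hJ (Classical.arbitrary N)) (hJM _)
  have hdpos : 0 < d := by
    rw [hd, Finset.lt_inf'_iff]
    exact hΔ
  have hc : 0 < M / d := div_pos hMpos hdpos
  rw [← sub_le_iff_le_add, ← div_le_iff₀' hc]
  apply le_csInf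
  · refine ⟨_, fun _ => ∑ i, 1 / J i, ?_, ?_, rfl⟩
    · intro j
      exact Finset.sum_nonneg fun i _ => (one_div_pos.mpr (hJ i)).le
    · intro i
      obtain ⟨j, hj⟩ := hsupp i
      have h1 : 1 / J i ≤ ∑ i, 1 / J i :=
        Finset.single_le_sum (f := fun i => 1 / J i)
          (fun i _ => (one_div_pos.mpr (hJ i)).le) (Finset.mem_univ i)
      refine h1.trans ?_
      exact Finset.single_le_sum (f := fun _ : K => ∑ i, 1 / J i)
        (fun _ _ => Finset.sum_nonneg fun i _ => (one_div_pos.mpr (hJ i)).le)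
        (by simpa [support'] using hj : j ∈ support' V i)
  · rintro s ⟨w, hw0, hw, rfl⟩
    rw [div_le_iff₀' hc, sub_le_iff_le_add]
    have hz0 : ∀ j : K, 0 ≤ (if j ∈ U then M * w j else 1) := by
      intro j
      split_ifs
      · exact mul_nonneg hMpos.le (hw0 j)
      · exact zero_le_one
    have hle : ∑ j, (if j ∈ U then M * w j else 1) ≤
        M / d * ∑ j ∈ U, Δ j * w j + ((Finset.univ \ U).card : ℝ) := by
      rw [← Finset.sum_sdiff (Finset.subset_univ U), add_comm]
      apply add_le_add
      · rw [Finset.mul_sum]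
        apply Finset.sum_le_sum
        intro j hj
        rw [if_pos hj, div_mul_eq_mul_div, le_div_iff₀ hdpos]
        have h2 := mul_le_mul_of_nonneg_left (hdΔ j hj) (mul_nonneg hMpos.le (hw0 j))
        linarith
      · rw [Finset.sum_congr rfl (g := fun _ => (1 : ℝ))]
        · simp
        · intro j hj
          rw [if_neg (Finset.mem_sdiff.mp hj).2]
    refine le_trans (csInf_le ?_ ⟨_, hz0, ?_, rfl⟩) hle
    · refine ⟨0, ?_⟩
      rintro _ ⟨z, hz, _, rfl⟩
      exact Finset.sum_nonneg fun j _ => hz j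
    · intro i
      by_cases h : ∃ j ∈ support' V i, j ∉ U
      · obtain ⟨j, hj, hjU⟩ := h
        have h3 := Finset.single_le_sum (f := fun j => if j ∈ U then M * w j else 1)
          (fun j _ => hz0 j) hj
        simpa only [if_neg hjU] using h3
      · push Not at h
        rw [Finset.sum_congr rfl (fun j hj => if_pos (h j hj)), ← Finset.mul_sum]
        have h4 := mul_le_mul_of_nonneg_left (hw i) hMpos.le
        refine le_trans ?_ h4
        rw [mul_one_div, one_le_div (hJ i)]
        exact hJM i
end

section
/- Let G be a bipartite network with nonempty base-arm set 𝒩, let U ⊆ 𝒦 be nonempty with gaps Δ_j > 0 (j ∈ U), and let J_i > 0 for i ∈ 𝒩. Let v denote the optimal value of LP P2 and c_μ the optimal value of LP P1. Then v ≥ (min_{i∈𝒩} J_i / max_{j∈U} Δ_j) · c_μ. (Lower inequality of Proposition 3.) -/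
open Finset

/-- lower inequality of Proposition 3. Let `v` be the optimal value of
LP `P2` and `c_μ` the optimal value of LP `P1`. Then
`v ≥ (min_{i∈𝒩} J_i / max_{j∈U} Δ_j) · c_μ`. -/
theorem lp2_ge_lp1
    {K N : Type*} [Fintype K] [Fintype N] [DecidableEq K] [DecidableEq N] [Nonempty N]
    (V : K → Finset N) (hsupp : ∀ i : N, ∃ j : K, i ∈ V j)
    (U : Finset K) (hU : U.Nonempty)
    (Δ : K → ℝ) (hΔ : ∀ j ∈ U, 0 < Δ j)
    (J : N → ℝ) (hJ : ∀ i : N, 0 < J i) :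
    (Finset.univ.inf' Finset.univ_nonempty J / U.sup' hU Δ) *
        sInf {s : ℝ | ∃ w : K → ℝ, (∀ j : K, 0 ≤ w j) ∧
          (∀ i : N, 1 / J i ≤ ∑ j ∈ support' V i, w j) ∧ s = ∑ j ∈ U, Δ j * w j} ≤
      sInf {s : ℝ | ∃ z : K → ℝ, (∀ j : K, 0 ≤ z j) ∧
        (∀ i : N, 1 ≤ ∑ j ∈ support' V i, z j) ∧ s = ∑ j, z j} := by
  have hm : 0 < Finset.univ.inf' Finset.univ_nonempty J := by
    rw [Finset.lt_inf'_iff]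
    exact fun i _ => hJ i
  have hD : 0 < U.sup' hU Δ := by
    obtain ⟨j, hj⟩ := hU
    exact lt_of_lt_of_le (hΔ j hj) (Finset.le_sup' Δ hj)
  have hmle : ∀ i, Finset.univ.inf' Finset.univ_nonempty J ≤ J i :=
    fun i => Finset.inf'_le J (Finset.mem_univ i)
  have hDle : ∀ j ∈ U, Δ j ≤ U.sup' hU Δ := fun j hj => Finset.le_sup' Δ hj
  generalize Finset.univ.inf' Finset.univ_nonempty J = m at *
  generalize U.sup' hU Δ = D at *
  apply le_csInf
  · refine ⟨_, fun _ => 1, fun _ => zero_le_one, fun i => ?_, rfl⟩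
    obtain ⟨j, hj⟩ := hsupp i
    have hjs : j ∈ support' V i := by simp [support', hj]
    exact Finset.single_le_sum (f := fun _ : K => (1 : ℝ)) (fun _ _ => zero_le_one) hjs
  · rintro s ⟨z, hz0, hz1, rfl⟩
    have h1 : sInf {s : ℝ | ∃ w : K → ℝ, (∀ j : K, 0 ≤ w j) ∧
          (∀ i : N, 1 / J i ≤ ∑ j ∈ support' V i, w j) ∧ s = ∑ j ∈ U, Δ j * w j} ≤
        ∑ j ∈ U, Δ j * (z j / m) := by
      apply csInf_le
      · refine ⟨0, ?_⟩
        rintro s ⟨w, hw0, _, rfl⟩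
        exact Finset.sum_nonneg fun j hj => mul_nonneg (hΔ j hj).le (hw0 j)
      · refine ⟨fun j => z j / m, fun j => div_nonneg (hz0 j) hm.le, fun i => ?_, rfl⟩
        rw [← Finset.sum_div]
        exact div_le_div₀ (zero_le_one.trans (hz1 i)) (hz1 i) hm (hmle i)
    have h2 : ∑ j ∈ U, Δ j * (z j / m) ≤ D / m * ∑ j, z j := by
      calc ∑ j ∈ U, Δ j * (z j / m) ≤ ∑ j ∈ U, D / m * z j := by
            apply Finset.sum_le_sum
            intro j hj
            have := mul_le_mul_of_nonneg_right (hDle j hj) (div_nonneg (hz0 j) hm.le)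
            calc _ ≤ _ := this
              _ = _ := by ring
        _ ≤ ∑ j, D / m * z j :=
            Finset.sum_le_sum_of_subset_of_nonneg (Finset.subset_univ U)
              fun j _ _ => mul_nonneg (div_pos hD hm).le (hz0 j)
        _ = _ := by rw [Finset.mul_sum]
    calc _ ≤ m / D * (D / m * ∑ j, z j) :=
          mul_le_mul_of_nonneg_left (h1.trans h2) (div_pos hm hD).le
      _ = _ := by field_simp
end

section
/- Let 𝒦 be a finite set, let Δ_j ∈ (0,1] for j ∈ 𝒦, and for each j set m_j := min{m ∈ ℕ : 2^{−m} < Δ_j/2}. Let Z > 0 and define m̄ := min{m ∈ ℕ : Z > ∑_{a ∈ 𝒦 : m_a > m} 2^{−m+1}} (this minimum exists since the sum is 0 for m large), and B := {j ∈ 𝒦 : m_j > m̄}. Then ∑_{j∈B} Δ_j ≤ Z. (Key combinatorial step in the proof of Proposition 6, with Z = ∑_{j∈𝒦} z_j*, showing the total gap of late-eliminated actions is controlled by the LP value.) -/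
open Finset

/-- key combinatorial step in the proof of Proposition 6. Let `𝒦` be a
finite set, `Δ_j ∈ (0,1]`, `m_j = min{m : 2^{-m} < Δ_j/2}`, `Z > 0`,
`m̄ = min{m : Z > ∑_{a : m_a > m} 2^{-m+1}}`, and `B = {j : m_j > m̄}`. Then
`∑_{j ∈ B} Δ_j ≤ Z`. -/
theorem late_eliminated_gap_sum_le
    {K : Type*} [Fintype K] [DecidableEq K]
    (Δ : K → ℝ) (hΔ0 : ∀ j, 0 < Δ j) (hΔ1 : ∀ j, Δ j ≤ 1)
    (Z : ℝ) (hZ : 0 < Z)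
    (m : K → ℕ) (hm : ∀ j, m j = sInf {k : ℕ | (2 : ℝ) ^ (-(k : ℤ)) < Δ j / 2})
    (mbar : ℕ)
    (hmbar : mbar = sInf {k : ℕ |
      (∑ a ∈ Finset.univ.filter (fun a => k < m a), (2 : ℝ) ^ (-(k : ℤ) + 1)) < Z}) :
    ∑ j ∈ Finset.univ.filter (fun j => mbar < m j), Δ j ≤ Z := by
  have hne : {k : ℕ | (∑ a ∈ Finset.univ.filter (fun a => k < m a),
      (2 : ℝ) ^ (-(k : ℤ) + 1)) < Z}.Nonempty := by
    refine ⟨Finset.univ.sup m, ?_⟩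
    have he : Finset.univ.filter (fun a => Finset.univ.sup m < m a) = ∅ := by
      apply Finset.filter_eq_empty_iff.mpr
      intro a _
      exact not_lt.mpr (Finset.le_sup (f := m) (Finset.mem_univ a))
    rw [Set.mem_setOf_eq, he, Finset.sum_empty]
    exact hZ
  have hmem := Nat.sInf_mem hne
  rw [← hmbar, Set.mem_setOf_eq] at hmem
  refine le_trans (Finset.sum_le_sum ?_) hmem.le
  intro j hj
  have hj' : mbar < m j := (Finset.mem_filter.mp hj).2
  rw [hm j] at hj'
  have h := Nat.notMem_of_lt_sInf hj'
  rw [Set.mem_setOf_eq, not_lt] at h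
  rw [zpow_add₀ (by norm_num : (2 : ℝ) ≠ 0), zpow_one]
  linarith
end
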